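/- Let λ, μ ∈ ℝ with μ > 0, let ω > 0, set k_s = ω/√μ, and let n ∈ ℕ. Define the vector field Q : ℝ² ∖ {0} → ℂ² by Q(x) = (2 n J_n(k_s‖x‖)/(k_s‖x‖)) w(x)^n ν(x) + 2 i J_n'(k_s‖x‖) w(x)^n t(x). Then Q is smooth on ℝ² ∖ {0} and satisfies both the time-harmonic Lamé equation μ ΔQ(x) + (λ + μ) ∇(∇·Q)(x) + ω² Q(x) = 0 for all x ≠ 0, and the divergence-free (s-wave) condition ∇·Q(x) = ∂₁Q₁(x) + ∂₂Q₂(x) = 0 for all x ≠ 0. -/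

import Mathlib

/-!
`Q` is the rotated gradient `(∂₂U, -∂₁U)` of the scalar potential
`U = (-2i/k) J_n(k|x|) e^{inθ}`, with `k = k_s` (`Q_eq`). A rotated gradient is divergence-free by
symmetry of second derivatives, and since partial derivatives commute with the Laplacian, its
components satisfy the same Helmholtz equation as `U` (`curl_lame`). As `μ k² = ω²` and `∇·Q = 0`,
the Lamé equation then reduces to the Helmholtz equation `ΔU = -k² U`.

To avoid polar coordinates, write `J_n(s) = (s/2)^n h_n((s/2)^2)` with `h_n` entire. Then
`J_n(k|x|) e^{inθ} = (k/2)^n h_n(k²|x|²/4) z^n` with `z = x₁ + i x₂`, which is smooth on all of `ℝ²`.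
Termwise differentiation gives `h_n' = -h_{n+1}` (`bh_hasDerivAt`), and comparing coefficients gives
the recurrence `t h_{n+2} - (n+1) h_{n+1} + h_n = 0` (`bh_rec`), which is exactly what the Helmholtz
equation for this function requires (`blk_helmholtz`).
-/

/-- Euclidean norm on `ℝ²` (represented as `ℝ × ℝ`). -/
noncomputable def r2 (x : ℝ × ℝ) : ℝ := Real.sqrt (x.1 ^ 2 + x.2 ^ 2)

/-- `w(x) = (x₁ + i x₂)/|x| = e^{iθ_x}` on `ℝ² ∖ {0}`. -/
noncomputable def wc (x : ℝ × ℝ) : ℂ := ((x.1 : ℂ) + Complex.I * (x.2 : ℂ)) / (r2 x : ℂ)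

/-- Bessel function of the first kind of (nonnegative integer) order `n`:
`J_n(s) = Σ_{m=0}^∞ (-1)^m/(m!(m+n)!) (s/2)^{2m+n}`. -/
noncomputable def besselJ (n : ℕ) (s : ℝ) : ℝ :=
  ∑' m : ℕ, ((-1 : ℝ) ^ m / ((m.factorial : ℝ) * ((m + n).factorial : ℝ))) *
    (s / 2) ^ (2 * m + n)

/-- First partial derivative `∂₁u` of a scalar field on `ℝ²`. -/
noncomputable def pd1 (u : ℝ × ℝ → ℂ) (x : ℝ × ℝ) : ℂ := fderiv ℝ u x (1, 0)

/-- Second partial derivative `∂₂u` of a scalar field on `ℝ²`. -/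
noncomputable def pd2 (u : ℝ × ℝ → ℂ) (x : ℝ × ℝ) : ℂ := fderiv ℝ u x (0, 1)

/-! ### The entire function behind the Bessel function -/

/-- The entire function `h_n(t) = Σ (-1)^m t^m / (m! (m+n)!)`, for which
`J_n(s) = (s/2)^n h_n((s/2)^2)`. -/
noncomputable def bh (n : ℕ) (t : ℝ) : ℝ :=
  ∑' m : ℕ, ((-1 : ℝ) ^ m / ((m.factorial : ℝ) * ((m + n).factorial : ℝ))) * t ^ m

theorem coeff_abs_le (n m : ℕ) :
    |(-1 : ℝ) ^ m / ((m.factorial : ℝ) * ((m + n).factorial : ℝ))| ≤ 1 / (m.factorial : ℝ) := by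
  rw [abs_div, abs_pow, abs_neg, abs_one, one_pow, abs_of_pos (by positivity)]
  have h1 : (1 : ℝ) ≤ ((m + n).factorial : ℝ) := by exact_mod_cast Nat.factorial_pos _
  have h2 : (0 : ℝ) < (m.factorial : ℝ) := by positivity
  exact one_div_le_one_div_of_le h2 (by nlinarith)

theorem bh_summable (n : ℕ) (t : ℝ) :
    Summable fun m : ℕ =>
      ((-1 : ℝ) ^ m / ((m.factorial : ℝ) * ((m + n).factorial : ℝ))) * t ^ m := by
  refine Summable.of_norm_bounded (Real.summable_pow_div_factorial |t|) fun m => ?_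
  rw [Real.norm_eq_abs, abs_mul, abs_pow]
  calc _ ≤ 1 / (m.factorial : ℝ) * |t| ^ m := by gcongr; exact coeff_abs_le n m
    _ = _ := by ring

theorem besselJ_eq (n : ℕ) (s : ℝ) : besselJ n s = (s / 2) ^ n * bh n ((s / 2) ^ 2) := by
  rw [besselJ, bh, ← tsum_mul_left]
  exact tsum_congr fun m => by rw [pow_add, pow_mul]; ring

/-- Termwise differentiation gives `h_n' = -h_{n+1}`. -/
theorem bh_hasDerivAt (n : ℕ) (t : ℝ) : HasDerivAt (bh n) (-bh (n + 1) t) t := by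
  set R : ℝ := |t| + 1
  have hR : 0 < R := by positivity
  have hu : Summable fun m : ℕ => (1 / (m.factorial : ℝ)) * (m * R ^ (m - 1)) := by
    rw [← summable_nat_add_iff 1]
    refine (Real.summable_pow_div_factorial R).congr fun m => ?_
    rw [Nat.factorial_succ, Nat.add_sub_cancel]
    push_cast
    field_simp
  have key := hasDerivAt_tsum_of_isPreconnected
    (g := fun (m : ℕ) (y : ℝ) =>
      ((-1 : ℝ) ^ m / ((m.factorial : ℝ) * ((m + n).factorial : ℝ))) * y ^ m)
    (g' := fun (m : ℕ) (y : ℝ) =>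
      ((-1 : ℝ) ^ m / ((m.factorial : ℝ) * ((m + n).factorial : ℝ))) * (m * y ^ (m - 1)))
    (y₀ := 0) (y := t) (t := Metric.ball (0 : ℝ) R) hu Metric.isOpen_ball
    (convex_ball _ _).isPreconnected
    (fun m y _ => (hasDerivAt_pow m y).const_mul _)
    (fun m y hy => by
      have hy' : |y| ≤ R := by simpa using (Metric.mem_ball.1 hy).le
      rw [Real.norm_eq_abs, abs_mul, abs_mul, abs_pow, Nat.abs_cast]
      gcongr
      exact coeff_abs_le n m)
    (Metric.mem_ball_self hR) (bh_summable n 0)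
    (by simp [R])
  have hs : Summable fun m : ℕ =>
      ((-1 : ℝ) ^ m / ((m.factorial : ℝ) * ((m + n).factorial : ℝ))) * (m * t ^ (m - 1)) := by
    refine Summable.of_norm_bounded hu fun m => ?_
    rw [Real.norm_eq_abs, abs_mul, abs_mul, abs_pow, Nat.abs_cast]
    gcongr
    · exact coeff_abs_le n m
    · simp [R]
  suffices h : -bh (n + 1) t = ∑' m : ℕ,
      ((-1 : ℝ) ^ m / ((m.factorial : ℝ) * ((m + n).factorial : ℝ))) * (m * t ^ (m - 1)) by
    rw [h]; exact key
  rw [hs.tsum_eq_zero_add, bh, ← tsum_neg]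
  simp only [Nat.cast_zero, zero_mul, mul_zero, zero_add]
  refine tsum_congr fun m => ?_
  rw [Nat.factorial_succ m, Nat.add_sub_cancel, show m + 1 + n = m + (n + 1) by ring, pow_succ]
  push_cast
  field_simp

/-- The Bessel equation, in the form `t h_{n+2} - (n+1) h_{n+1} + h_n = 0`. -/
theorem bh_rec (n : ℕ) (t : ℝ) :
    t * bh (n + 2) t - (n + 1) * bh (n + 1) t + bh n t = 0 := by
  have h0 := (bh_summable n t).hasSum
  have h1 := ((bh_summable (n + 1) t).hasSum).mul_left ((n : ℝ) + 1)
  have h2 := ((bh_summable (n + 2) t).hasSum).mul_left t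
  have h3 := h1.sub h0
  have h4 : HasSum (fun m : ℕ => -(m : ℝ) *
      ((-1 : ℝ) ^ m / ((m.factorial : ℝ) * ((m + (n + 1)).factorial : ℝ))) * t ^ m)
      (t * bh (n + 2) t) := by
    -- The term `m = 0` vanishes, so the series may be shifted by one index.
    rw [← hasSum_nat_add_iff' 1]
    simp only [Finset.sum_range_one, Nat.cast_zero, neg_zero, zero_mul, sub_zero]
    refine h2.congr_fun ?_
    intro m
    rw [Nat.factorial_succ m, show m + 1 + (n + 1) = m + (n + 2) by ring, pow_succ, pow_succ]
    push_cast
    field_simp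
  have h5 : t * bh (n + 2) t = (n + 1) * bh (n + 1) t - bh n t := by
    refine h4.unique ?_
    refine h3.congr_fun ?_
    intro m
    rw [show m + (n + 1) = (m + n) + 1 by ring, Nat.factorial_succ (m + n)]
    push_cast
    field_simp
    ring
  linarith

theorem bh_contDiff (k : ℕ) : ∀ n : ℕ, ContDiff ℝ k (bh n) := by
  induction k with
  | zero =>
    intro n
    exact contDiff_zero.2 (continuous_iff_continuousAt.2 fun t => (bh_hasDerivAt n t).continuousAt)
  | succ k ih =>
    intro n
    push_cast
    refine contDiff_succ_iff_deriv.2 ⟨fun t => (bh_hasDerivAt n t).differentiableAt, by simp, ?_⟩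
    rw [show deriv (bh n) = fun t => -bh (n + 1) t from funext fun t => (bh_hasDerivAt n t).deriv]
    exact (ih (n + 1)).neg

/-! ### A smooth solution of the Helmholtz equation -/

/-- The complex coordinate `z = x₁ + i x₂`. -/
noncomputable def zc (x : ℝ × ℝ) : ℂ := (x.1 : ℂ) + Complex.I * (x.2 : ℂ)

/-- The building block `h_m(k²|x|²/4) z^j`; for `m = j = n` it is `J_n(k|x|) e^{inθ}` up to the
factor `(k/2)^n`. -/
noncomputable def blk (k : ℝ) (m j : ℕ) (x : ℝ × ℝ) : ℂ :=
  ((bh m (k ^ 2 / 4 * (x.1 ^ 2 + x.2 ^ 2)) : ℝ) : ℂ) * zc x ^ j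

theorem blk_contDiff (k : ℝ) (m j : ℕ) : ContDiff ℝ (⊤ : ℕ∞) (blk k m j) := by
  have hb : ContDiff ℝ (⊤ : ℕ∞) (bh m) := contDiff_infty.2 fun l => bh_contDiff l m
  have h1 : ContDiff ℝ (⊤ : ℕ∞) fun x : ℝ × ℝ => (x.1 : ℂ) :=
    Complex.ofRealCLM.contDiff.comp contDiff_fst
  have h2 : ContDiff ℝ (⊤ : ℕ∞) fun x : ℝ × ℝ => (x.2 : ℂ) :=
    Complex.ofRealCLM.contDiff.comp contDiff_snd
  have h3 : ContDiff ℝ (⊤ : ℕ∞) zc := h1.add (contDiff_const.mul h2)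
  have h4 : ContDiff ℝ (⊤ : ℕ∞) fun x : ℝ × ℝ => k ^ 2 / 4 * (x.1 ^ 2 + x.2 ^ 2) := by fun_prop
  exact (Complex.ofRealCLM.contDiff.comp (hb.comp h4)).mul (h3.pow j)

theorem zc_hasFDerivAt (x : ℝ × ℝ) :
    HasFDerivAt zc (Complex.ofRealCLM.comp (ContinuousLinearMap.fst ℝ ℝ ℝ)
      + Complex.I • Complex.ofRealCLM.comp (ContinuousLinearMap.snd ℝ ℝ ℝ)) x :=
  (Complex.ofRealCLM.comp (ContinuousLinearMap.fst ℝ ℝ ℝ)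
      + Complex.I • Complex.ofRealCLM.comp (ContinuousLinearMap.snd ℝ ℝ ℝ)).hasFDerivAt

/-- Derivative of a building block in the direction `v`, where `h_m' = -h_{m+1}`. For `j = 0` the
truncated exponent `j - 1` is harmless because of the factor `j`. -/
theorem blk_fderiv (k : ℝ) (m j : ℕ) (x v : ℝ × ℝ) :
    fderiv ℝ (blk k m j) x v =
      -((k ^ 2 / 2 : ℝ) : ℂ) * ((x.1 : ℂ) * v.1 + x.2 * v.2) * blk k (m + 1) j x
        + j * ((v.1 : ℂ) + Complex.I * v.2) * blk k m (j - 1) x := by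
  have hq : HasFDerivAt (fun x : ℝ × ℝ => k ^ 2 / 4 * (x.1 ^ 2 + x.2 ^ 2)) _ x :=
    (((hasFDerivAt_fst (𝕜 := ℝ) (p := x)).pow 2).add
      ((hasFDerivAt_snd (𝕜 := ℝ) (p := x)).pow 2)).const_mul (k ^ 2 / 4)
  have hb := Complex.ofRealCLM.hasFDerivAt.comp x ((bh_hasDerivAt m _).comp_hasFDerivAt x hq)
  have h := hb.mul ((zc_hasFDerivAt x).pow j)
  have h' : fderiv ℝ (blk k m j) x = _ := h.fderiv
  rw [h']
  simp [blk]
  ring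


theorem blk_fderiv_fderiv (k : ℝ) (m j : ℕ) (x v : ℝ × ℝ) :
    fderiv ℝ (fun y => fderiv ℝ (blk k m j) y v) x v =
      -((k ^ 2 / 2 : ℝ) : ℂ) * (((v.1 : ℂ) ^ 2 + (v.2 : ℂ) ^ 2) * blk k (m + 1) j x
          + ((x.1 : ℂ) * v.1 + x.2 * v.2) * fderiv ℝ (blk k (m + 1) j) x v)
        + j * ((v.1 : ℂ) + Complex.I * v.2) * fderiv ℝ (blk k m (j - 1)) x v := by
  have hd : ∀ m j, HasFDerivAt (blk k m j) (fderiv ℝ (blk k m j) x) x := fun m j => by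
    have hb : DifferentiableAt ℝ (blk k m j) x :=
      (blk_contDiff k m j).differentiable (by simp) x
    exact hb.hasFDerivAt
  have hL₁ : HasFDerivAt (𝕜 := ℝ) (fun y : ℝ × ℝ => (y.1 : ℂ)) _ x :=
    (Complex.ofRealCLM.comp (ContinuousLinearMap.fst ℝ ℝ ℝ)).hasFDerivAt
  have hL₂ : HasFDerivAt (𝕜 := ℝ) (fun y : ℝ × ℝ => (y.2 : ℂ)) _ x :=
    (Complex.ofRealCLM.comp (ContinuousLinearMap.snd ℝ ℝ ℝ)).hasFDerivAt
  have hL := (hL₁.mul_const (v.1 : ℂ)).fun_add (hL₂.mul_const (v.2 : ℂ))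
  have h := ((hL.const_mul (-((k ^ 2 / 2 : ℝ) : ℂ))).fun_mul (hd (m + 1) j)).fun_add
    ((hd m (j - 1)).const_mul (j * ((v.1 : ℂ) + Complex.I * v.2)))
  simp only [blk_fderiv k m j]
  rw [h.fderiv]
  simp
  ring

/-- Helmholtz equation `Δu = -k² u` for `u = h_n(k²|x|²/4) z^n`. -/
theorem blk_helmholtz (k : ℝ) (n : ℕ) (x : ℝ × ℝ) :
    pd1 (pd1 (blk k n n)) x + pd2 (pd2 (blk k n n)) x = -((k ^ 2 : ℝ) : ℂ) * blk k n n x := by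
  have h1 := blk_fderiv_fderiv k n n x (1, 0)
  have h2 := blk_fderiv_fderiv k n n x (0, 1)
  change fderiv ℝ (fun y => fderiv ℝ (blk k n n) y (1, 0)) x (1, 0)
    + fderiv ℝ (fun y => fderiv ℝ (blk k n n) y (0, 1)) x (0, 1) = _
  rw [h1, h2]
  simp only [blk_fderiv, blk]
  have hr := congrArg (fun t : ℝ => (t : ℂ)) (bh_rec n (k ^ 2 / 4 * (x.1 ^ 2 + x.2 ^ 2)))
  set q := k ^ 2 / 4 * (x.1 ^ 2 + x.2 ^ 2) with hq
  have hqc : (q : ℂ) = k ^ 2 / 4 * ((x.1 : ℂ) ^ 2 + (x.2 : ℂ) ^ 2) := by rw [hq]; push_cast; ring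
  -- Multiplying by `n` makes this true also for `n = 0`, where `n - 1` truncates.
  have hz : (n : ℂ) * (((x.1 : ℂ) + Complex.I * x.2) * zc x ^ (n - 1)) = n * zc x ^ n := by
    rcases n with _ | n
    · simp
    · rw [Nat.add_sub_cancel, pow_succ', zc]
  push_cast at hr ⊢
  rw [hqc] at hr
  generalize (bh n q : ℂ) = A at *
  generalize (bh (n + 1) q : ℂ) = B at *
  generalize (bh (n + 2) q : ℂ) = C at *
  simp only [mul_one, mul_zero, add_zero, zero_add]
  -- The pure `z^(n-2)` terms cancel since `1 + i² = 0`, i.e. since `z^n` is harmonic.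
  linear_combination (k : ℂ) ^ 2 * zc x ^ n * hr - (k : ℂ) ^ 2 * B * hz
    + (n : ℂ) * ((n - 1 : ℕ) : ℂ) * A * zc x ^ (n - 1 - 1) * Complex.I_sq

/-! ### Calculus of the partial derivatives and rotated gradients -/

theorem pd_comm {U : ℝ × ℝ → ℂ} (hU : ContDiff ℝ (⊤ : ℕ∞) U) : pd1 (pd2 U) = pd2 (pd1 U) := by
  funext x
  have hd : DifferentiableAt ℝ (fderiv ℝ U) x :=
    (hU.fderiv_right (m := 1) (by norm_cast)).differentiable (by simp) x
  have hs : IsSymmSndFDerivAt ℝ U x :=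
    hU.contDiffAt.isSymmSndFDerivAt (by
      simpa using WithTop.coe_le_coe.2 (le_top : (2 : ℕ∞) ≤ ⊤))
  change fderiv ℝ (fun y => fderiv ℝ U y (0, 1)) x (1, 0)
    = fderiv ℝ (fun y => fderiv ℝ U y (1, 0)) x (0, 1)
  rw [fderiv_clm_apply hd (differentiableAt_const _), fderiv_clm_apply hd (differentiableAt_const _)]
  simpa using hs.eq (1, 0) (0, 1)

theorem pd1_contDiff {U : ℝ × ℝ → ℂ} (hU : ContDiff ℝ (⊤ : ℕ∞) U) :
    ContDiff ℝ (⊤ : ℕ∞) (pd1 U) :=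
  (hU.fderiv_right (m := (⊤ : ℕ∞)) (by simp)).clm_apply contDiff_const

theorem pd2_contDiff {U : ℝ × ℝ → ℂ} (hU : ContDiff ℝ (⊤ : ℕ∞) U) :
    ContDiff ℝ (⊤ : ℕ∞) (pd2 U) :=
  (hU.fderiv_right (m := (⊤ : ℕ∞)) (by simp)).clm_apply contDiff_const

theorem pd1_congr {f g : ℝ × ℝ → ℂ} {s : Set (ℝ × ℝ)} (hs : IsOpen s) (h : Set.EqOn f g s) :
    Set.EqOn (pd1 f) (pd1 g) s := fun x hx => by
  rw [pd1, pd1, (h.eventuallyEq_of_mem (hs.mem_nhds hx)).fderiv_eq]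

theorem pd2_congr {f g : ℝ × ℝ → ℂ} {s : Set (ℝ × ℝ)} (hs : IsOpen s) (h : Set.EqOn f g s) :
    Set.EqOn (pd2 f) (pd2 g) s := fun x hx => by
  rw [pd2, pd2, (h.eventuallyEq_of_mem (hs.mem_nhds hx)).fderiv_eq]

theorem pd1_const_mul {f : ℝ × ℝ → ℂ} (hf : ContDiff ℝ (⊤ : ℕ∞) f) (c : ℂ) :
    pd1 (fun x => c * f x) = fun x => c * pd1 f x := by
  funext x
  simp [pd1, fderiv_const_mul (hf.differentiable (by simp) x)]

theorem pd2_const_mul {f : ℝ × ℝ → ℂ} (hf : ContDiff ℝ (⊤ : ℕ∞) f) (c : ℂ) :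
    pd2 (fun x => c * f x) = fun x => c * pd2 f x := by
  funext x
  simp [pd2, fderiv_const_mul (hf.differentiable (by simp) x)]

theorem pd1_add {f g : ℝ × ℝ → ℂ} (hf : ContDiff ℝ (⊤ : ℕ∞) f) (hg : ContDiff ℝ (⊤ : ℕ∞) g) :
    pd1 (fun x => f x + g x) = fun x => pd1 f x + pd1 g x := by
  funext x
  simp [pd1, fderiv_fun_add (hf.differentiable (by simp) x) (hg.differentiable (by simp) x)]

theorem pd2_add {f g : ℝ × ℝ → ℂ} (hf : ContDiff ℝ (⊤ : ℕ∞) f) (hg : ContDiff ℝ (⊤ : ℕ∞) g) :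
    pd2 (fun x => f x + g x) = fun x => pd2 f x + pd2 g x := by
  funext x
  simp [pd2, fderiv_fun_add (hf.differentiable (by simp) x) (hg.differentiable (by simp) x)]

/-- The rotated gradient `(∂₂U, -∂₁U)` of a solution `U` of the Helmholtz equation is an
s-wave: it is divergence-free and each component again solves the Helmholtz equation. -/
theorem curl_lame {U : ℝ × ℝ → ℂ} (hU : ContDiff ℝ (⊤ : ℕ∞) U) (κ : ℂ)
    (hH : ∀ x, pd1 (pd1 U) x + pd2 (pd2 U) x = κ * U x) (s : Set (ℝ × ℝ)) (hs : IsOpen s)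
    (f g : ℝ × ℝ → ℂ) (hf : Set.EqOn f (pd2 U) s) (hg : Set.EqOn g (fun x => -1 * pd1 U x) s)
    (x : ℝ × ℝ) (hx : x ∈ s) :
    pd1 (pd1 f) x + pd2 (pd2 f) x = κ * f x ∧ pd1 (pd1 g) x + pd2 (pd2 g) x = κ * g x ∧
      pd1 f x + pd2 g x = 0 := by
  have h1 := pd1_contDiff hU
  have h2 := pd2_contDiff hU
  have hHf : (fun x => pd1 (pd1 U) x + pd2 (pd2 U) x) = fun x => κ * U x := funext hH
  have e1 := congrArg pd1 hHf
  have e2 := congrArg pd2 hHf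
  rw [pd1_add (pd1_contDiff h1) (pd2_contDiff h2), pd1_const_mul hU, pd_comm h2, pd_comm hU] at e1
  rw [pd2_add (pd1_contDiff h1) (pd2_contDiff h2), pd2_const_mul hU, ← pd_comm h1, ← pd_comm hU]
    at e2
  have e1x := congrFun e1 x
  have e2x := congrFun e2 x
  refine ⟨?_, ?_, ?_⟩
  · rw [pd1_congr hs (pd1_congr hs hf) hx, pd2_congr hs (pd2_congr hs hf) hx, hf hx]
    exact e2x
  · rw [pd1_congr hs (pd1_congr hs hg) hx, pd2_congr hs (pd2_congr hs hg) hx, hg hx,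
      pd1_const_mul h1, pd2_const_mul h1, pd1_const_mul (pd1_contDiff h1),
      pd2_const_mul (pd2_contDiff h1)]
    linear_combination -e1x
  · rw [pd1_congr hs hf hx, pd2_congr hs hg hx, pd2_const_mul h1, pd_comm hU]
    ring

/-! ### The field as a rotated gradient -/

theorem besselJ_deriv (n : ℕ) (s : ℝ) :
    deriv (besselJ n) s = n * (s / 2) ^ (n - 1) / 2 * bh n ((s / 2) ^ 2)
      - (s / 2) ^ (n + 1) * bh (n + 1) ((s / 2) ^ 2) := by
  rw [show besselJ n = fun s => (s / 2) ^ n * bh n ((s / 2) ^ 2) from funext (besselJ_eq n)]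
  have h0 : HasDerivAt (fun s : ℝ => s / 2) (1 / 2) s := (hasDerivAt_id s).div_const 2
  have h2 : HasDerivAt (fun s : ℝ => bh n ((s / 2) ^ 2)) _ s :=
    HasDerivAt.comp (h₂ := bh n) (h := fun s : ℝ => (s / 2) ^ 2) s
      (bh_hasDerivAt n ((s / 2) ^ 2)) (h0.fun_pow 2)
  have h3 : HasDerivAt (fun s : ℝ => (s / 2) ^ n * bh n ((s / 2) ^ 2)) _ s := (h0.fun_pow n).fun_mul h2
  rw [h3.deriv]
  simp
  ring

theorem r2_pos {x : ℝ × ℝ} (hx : x ≠ 0) : 0 < r2 x := by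
  refine Real.sqrt_pos.2 ?_
  by_contra h
  refine hx (Prod.ext ?_ ?_) <;> simp <;> nlinarith [sq_nonneg x.1, sq_nonneg x.2]

/-- The scalar `(-2i/k) J_n(k|x|) e^{inθ}`, whose rotated gradient is `Q`. -/
noncomputable def pot (k : ℝ) (n : ℕ) (x : ℝ × ℝ) : ℂ :=
  (-2 * Complex.I / k * (k / 2) ^ n) * blk k n n x

/-- The derivative of the potential in the direction `v = (a, b)` equals the `Q`-type combination
of radial and tangential parts. The direction `(0, 1)` gives `Q₁` and `(1, 0)` gives `-Q₂`. -/
theorem Q_eq (k : ℝ) (hk : 0 < k) (n : ℕ) (x : ℝ × ℝ) (hx : x ≠ 0) (a b : ℝ) :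
    (2 * (n : ℂ) * (besselJ n (k * r2 x) : ℂ) / ((k * r2 x : ℝ) : ℂ))
           * wc x ^ n * (((x.1 * b - x.2 * a) / r2 x : ℝ) : ℂ)
         + (2 * Complex.I * ((deriv (besselJ n) (k * r2 x) : ℝ) : ℂ))
             * wc x ^ n * ((-(x.1 * a + x.2 * b) / r2 x : ℝ) : ℂ)
      = fderiv ℝ (pot k n) x (a, b) := by
  have hr := r2_pos hx
  have hrc : (r2 x : ℂ) ≠ 0 := by exact_mod_cast hr.ne'
  have hkc : (k : ℂ) ≠ 0 := by exact_mod_cast hk.ne'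
  have hsq : r2 x ^ 2 = x.1 ^ 2 + x.2 ^ 2 := Real.sq_sqrt (by positivity)
  have hsqc : (r2 x : ℂ) ^ 2 = (x.1 : ℂ) ^ 2 + (x.2 : ℂ) ^ 2 := by exact_mod_cast hsq
  have hpot : fderiv ℝ (pot k n) x (a, b)
      = (-2 * Complex.I / k * (k / 2) ^ n) * fderiv ℝ (blk k n n) x (a, b) := by
    have h := fderiv_const_mul ((blk_contDiff k n n).differentiable (by simp) x)
      (-2 * Complex.I / k * (k / 2) ^ n)
    change fderiv ℝ (fun y => (-2 * Complex.I / k * (k / 2) ^ n) * blk k n n y) x (a, b) = _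
    rw [h]
    simp
  rw [hpot, blk_fderiv, besselJ_deriv, besselJ_eq, blk, blk,
    show (k * r2 x / 2) ^ 2 = k ^ 2 / 4 * (x.1 ^ 2 + x.2 ^ 2) by rw [← hsq]; ring,
    show wc x = zc x / r2 x from rfl]
  generalize bh n _ = A
  generalize bh (n + 1) _ = B
  -- `z * conj z = r²` turns `z^n * conj z / r²` into `z^(n-1)`.
  have hzz : zc x * ((x.1 : ℂ) - Complex.I * x.2) = (r2 x : ℂ) ^ 2 := by
    rw [hsqc, zc]
    linear_combination -(x.2 : ℂ) ^ 2 * Complex.I_sq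
  generalize zc x = z at *
  generalize (r2 x) = r at *
  push_cast
  rcases n with _ | n
  · simp
    field_simp
    ring
  · simp only [Nat.add_sub_cancel, pow_succ, div_pow, mul_pow]
    push_cast
    have e1 : (r : ℂ) ^ n ≠ 0 := pow_ne_zero _ hrc
    field_simp
    linear_combination
      -(2 * ((n : ℂ) + 1) * A * z ^ n * Complex.I * (a + Complex.I * b)) * hzz
      + (2 * ((n : ℂ) + 1) * A * z ^ n * z * (x.1 * b - x.2 * a - Complex.I * x.2 * b))
        * Complex.I_sq

/-- The s-wave field `Q_n^i(k_s|x|) = (2n J_n(k_s|x|)/(k_s|x|)) e^{inθ}ν + 2i J_n'(k_s|x|) e^{inθ}t`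
is smooth on `ℝ² ∖ {0}`, satisfies the time-harmonic Lamé equation
`μΔQ + (λ+μ)∇(∇·Q) + ω²Q = 0` there, and is divergence-free: `∂₁Q₁ + ∂₂Q₂ = 0`. -/
theorem stmt11 (lam mu : ℝ) (hmu : 0 < mu) (ω : ℝ) (hω : 0 < ω) (n : ℕ) :
    let ks : ℝ := ω / Real.sqrt mu
    let Q : ℝ × ℝ → ℂ × ℂ := fun x =>
      ((2 * (n : ℂ) * (besselJ n (ks * r2 x) : ℂ) / ((ks * r2 x : ℝ) : ℂ))
           * wc x ^ n * ((x.1 / r2 x : ℝ) : ℂ)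
         + (2 * Complex.I * ((deriv (besselJ n) (ks * r2 x) : ℝ) : ℂ))
             * wc x ^ n * ((-x.2 / r2 x : ℝ) : ℂ),
       (2 * (n : ℂ) * (besselJ n (ks * r2 x) : ℂ) / ((ks * r2 x : ℝ) : ℂ))
           * wc x ^ n * ((x.2 / r2 x : ℝ) : ℂ)
         + (2 * Complex.I * ((deriv (besselJ n) (ks * r2 x) : ℝ) : ℂ))
             * wc x ^ n * ((x.1 / r2 x : ℝ) : ℂ))
    let Q1 : ℝ × ℝ → ℂ := fun x => (Q x).1
    let Q2 : ℝ × ℝ → ℂ := fun x => (Q x).2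
    let divQ : ℝ × ℝ → ℂ := fun x => pd1 Q1 x + pd2 Q2 x
    ContDiffOn ℝ (⊤ : ℕ∞) Q {(0 : ℝ × ℝ)}ᶜ
    ∧ (∀ x : ℝ × ℝ, x ≠ 0 →
        (mu : ℂ) * (pd1 (pd1 Q1) x + pd2 (pd2 Q1) x)
          + ((lam + mu : ℝ) : ℂ) * pd1 divQ x + ((ω ^ 2 : ℝ) : ℂ) * Q1 x = 0
        ∧ (mu : ℂ) * (pd1 (pd1 Q2) x + pd2 (pd2 Q2) x)
          + ((lam + mu : ℝ) : ℂ) * pd2 divQ x + ((ω ^ 2 : ℝ) : ℂ) * Q2 x = 0)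
    ∧ (∀ x : ℝ × ℝ, x ≠ 0 → divQ x = 0) := by
  intro ks Q Q1 Q2 divQ
  have hk : 0 < ks := div_pos hω (Real.sqrt_pos.2 hmu)
  have hkm : mu * ks ^ 2 = ω ^ 2 := by
    simp only [ks]
    rw [div_pow, Real.sq_sqrt hmu.le]
    field_simp
  have hs : IsOpen ({(0 : ℝ × ℝ)}ᶜ : Set (ℝ × ℝ)) := isOpen_compl_singleton
  have hU : ContDiff ℝ (⊤ : ℕ∞) (pot ks n) := contDiff_const.mul (blk_contDiff ks n n)
  have hH : ∀ x, pd1 (pd1 (pot ks n)) x + pd2 (pd2 (pot ks n)) x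
      = -((ks ^ 2 : ℝ) : ℂ) * pot ks n x := fun x => by
    have hb := blk_contDiff ks n n
    have h := blk_helmholtz ks n x
    rw [show pot ks n = fun x => (-2 * Complex.I / ks * (ks / 2) ^ n) * blk ks n n x from rfl,
      pd1_const_mul hb, pd2_const_mul hb, pd1_const_mul (pd1_contDiff hb),
      pd2_const_mul (pd2_contDiff hb)]
    linear_combination (-2 * Complex.I / ks * (ks / 2) ^ n) * h
  have h1 : Set.EqOn Q1 (pd2 (pot ks n)) {(0 : ℝ × ℝ)}ᶜ := fun x hx => by
    rw [pd2, ← Q_eq ks hk n x hx 0 1]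
    simp [Q1, Q]
  have h2 : Set.EqOn Q2 (fun x => -1 * pd1 (pot ks n) x) {(0 : ℝ × ℝ)}ᶜ := fun x hx => by
    change Q2 x = -1 * pd1 (pot ks n) x
    rw [pd1, ← Q_eq ks hk n x hx 1 0]
    simp [Q2, Q]
    ring
  have key := curl_lame hU _ hH _ hs Q1 Q2 h1 h2
  -- The divergence vanishes on an open set, so its gradient vanishes there as well.
  have hdiv : Set.EqOn divQ (fun _ => 0) {(0 : ℝ × ℝ)}ᶜ := fun x hx => (key x hx).2.2
  refine ⟨?_, fun x hx => ⟨?_, ?_⟩, fun x hx => hdiv hx⟩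
  · refine ContDiffOn.congr (f := fun x => (pd2 (pot ks n) x, -1 * pd1 (pot ks n) x)) ?_
      fun x hx => Prod.ext (h1 hx) (h2 hx)
    exact ((pd2_contDiff hU).prodMk (contDiff_const.mul (pd1_contDiff hU))).contDiffOn
  · rw [(key x hx).1, pd1_congr hs hdiv hx, ← hkm]
    simp [pd1]
    ring
  · rw [(key x hx).2.1, pd2_congr hs hdiv hx, ← hkm]
    simp [pd2]
    ring
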